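/- arXiv:2411.05716 — 2 statements merged into one kernel-verified Lean document; each statement's English description precedes it below -/
import Mathlib

section
/- Let a, c ∈ ℂ with a ≠ 1, and let L⁵₂(a,c) be the left-symmetric dialgebra on ℂ² with basis e₁, e₂ and products e₂ ⊣ e₂ = c·e₁ + e₂, e₂ ⊢ e₁ = a·e₁, e₂ ⊢ e₂ = c·(1−a)·e₁ + e₂ (all other basis products zero). Then a linear map d : ℂ² → ℂ² is a (1,0,1)-derivation of L⁵₂(a,c) if and only if its matrix in the basis (e₁,e₂) has the form [[d₁₁, −c·d₁₁ + c·d₂₂],[0, d₂₂]] for some d₁₁, d₂₂ ∈ ℂ; in particular Der_{(1,0,1)}L⁵₂(a,c) has dimension 2. -/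
noncomputable section

/-- `d` is a `(ρ,τ,σ)`-derivation of the algebra `(S, la, ra)`, where `la` is the
left product `⊣` and `ra` is the right product `⊢`. -/
def IsDer {K : Type*} [CommRing K] {S : Type*} [AddCommGroup S] [Module K S]
    (la ra : S →ₗ[K] S →ₗ[K] S) (ρ τ σ : K) (d : S →ₗ[K] S) : Prop :=
  (∀ p q : S, ρ • d (la p q) = τ • la (d p) q + σ • la p (d q)) ∧
  (∀ p q : S, ρ • d (ra p q) = τ • ra (d p) q + σ • ra p (d q))

/-- The space `Der_{(ρ,τ,σ)} S` of `(ρ,τ,σ)`-derivations, as a submodule of `End S`. -/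
def DerSub {K : Type*} [CommRing K] {S : Type*} [AddCommGroup S] [Module K S]
    (la ra : S →ₗ[K] S →ₗ[K] S) (ρ τ σ : K) : Submodule K (S →ₗ[K] S) where
  carrier := {d | IsDer la ra ρ τ σ d}
  zero_mem' := ⟨fun p q => by simp, fun p q => by simp⟩
  add_mem' := by
    rintro d₁ d₂ h₁ h₂
    refine ⟨fun p q => ?_, fun p q => ?_⟩
    · have a1 := h₁.1 p q; have a2 := h₂.1 p q
      simp only [LinearMap.add_apply, map_add, smul_add]
      rw [a1, a2]; abel
    · have a1 := h₁.2 p q; have a2 := h₂.2 p q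
      simp only [LinearMap.add_apply, map_add, smul_add]
      rw [a1, a2]; abel
  smul_mem' := by
    rintro c d h
    refine ⟨fun p q => ?_, fun p q => ?_⟩
    · simp only [LinearMap.smul_apply, map_smul]
      rw [smul_comm ρ c, h.1 p q, smul_add, smul_comm τ c, smul_comm σ c]
    · simp only [LinearMap.smul_apply, map_smul]
      rw [smul_comm ρ c, h.2 p q, smul_add, smul_comm τ c, smul_comm σ c]

/-- The left product `⊣` of the dialgebra, extended bilinearly from its values on the
basis `e₁ = (1,0)`, `e₂ = (0,1)` of `ℂ²`. -/
def L5l (a c : ℂ) : (ℂ × ℂ) →ₗ[ℂ] (ℂ × ℂ) →ₗ[ℂ] (ℂ × ℂ) :=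
  LinearMap.mk₂ ℂ (fun p q => (c * p.2 * q.2, p.2 * q.2))
    (by intros; ext <;> simp <;> ring)
    (by intros; ext <;> simp <;> ring)
    (by intros; ext <;> simp <;> ring)
    (by intros; ext <;> simp <;> ring)

/-- The right product `⊢` of the dialgebra, extended bilinearly from its values on the
basis `e₁ = (1,0)`, `e₂ = (0,1)` of `ℂ²`. -/
def L5r (a c : ℂ) : (ℂ × ℂ) →ₗ[ℂ] (ℂ × ℂ) →ₗ[ℂ] (ℂ × ℂ) :=
  LinearMap.mk₂ ℂ (fun p q => (a * p.2 * q.1 + c * (1 - a) * p.2 * q.2, p.2 * q.2))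
    (by intros; ext <;> simp <;> ring)
    (by intros; ext <;> simp <;> ring)
    (by intros; ext <;> simp <;> ring)
    (by intros; ext <;> simp <;> ring)

theorem L5_decomp (d : (ℂ × ℂ) →ₗ[ℂ] (ℂ × ℂ)) (p : ℂ × ℂ) :
    d p = p.1 • d ((1 : ℂ), (0 : ℂ)) + p.2 • d ((0 : ℂ), (1 : ℂ)) := by
  rw [← map_smul, ← map_smul, ← map_add]
  congr 1
  ext <;> simp

theorem L5_iff (a c : ℂ) (d : (ℂ × ℂ) →ₗ[ℂ] (ℂ × ℂ)) : IsDer (L5l a c) (L5r a c) 1 0 1 d ↔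
      ∃ d₁₁ d₂₂ : ℂ, d ((1 : ℂ), (0 : ℂ)) = (d₁₁, 0) ∧
        d ((0 : ℂ), (1 : ℂ)) = (-c * d₁₁ + c * d₂₂, d₂₂) := by
  constructor
  · rintro ⟨h, -⟩
    have h1 := h (0, 1) (1, 0)
    have h2 := h (0, 1) (0, 1)
    rw [L5_decomp d (L5l a c _ _)] at h1 h2
    simp only [L5l, LinearMap.mk₂_apply, Prod.ext_iff] at h1 h2
    simp at h1 h2
    refine ⟨(d (1, 0)).1, (d (0, 1)).2, ?_, ?_⟩
    · ext
      · rfl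
      · exact h1.2.symm
    · ext
      · simp only
        linear_combination h2.1
      · rfl
  · rintro ⟨x, w, h1, h2⟩
    refine ⟨fun p q => ?_, fun p q => ?_⟩
    · rw [L5_decomp d (L5l a c _ _), L5_decomp d q, h1, h2]
      ext <;> simp [L5l] <;> ring
    · rw [L5_decomp d (L5r a c _ _), L5_decomp d q, h1, h2]
      ext <;> simp [L5r] <;> ring

/-- The parametrization of the derivations by the two diagonal entries. -/
def L5param (c : ℂ) : (ℂ × ℂ) →ₗ[ℂ] ((ℂ × ℂ) →ₗ[ℂ] (ℂ × ℂ)) :=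
  LinearMap.mk₂ ℂ (fun t p => (t.1 * p.1 + (-c * t.1 + c * t.2) * p.2, t.2 * p.2))
    (by intros; ext <;> simp <;> ring)
    (by intros; ext <;> simp <;> ring)
    (by intros; ext <;> simp <;> ring)
    (by intros; ext <;> simp <;> ring)

theorem L5_range (a c : ℂ) :
    DerSub (L5l a c) (L5r a c) 1 0 1 = LinearMap.range (L5param c) := by
  ext d
  change IsDer (L5l a c) (L5r a c) 1 0 1 d ↔ _
  rw [L5_iff, LinearMap.mem_range]
  constructor
  · rintro ⟨x, w, h1, h2⟩
    refine ⟨(x, w), LinearMap.ext fun p => ?_⟩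
    rw [L5_decomp d p, h1, h2]
    ext <;> simp [L5param] <;> ring
  · rintro ⟨⟨x, w⟩, rfl⟩
    exact ⟨x, w, by simp [L5param], by simp [L5param]⟩

theorem L5param_injective (c : ℂ) : Function.Injective (L5param c) := by
  rintro ⟨x, w⟩ ⟨x', w'⟩ h
  have h1 := LinearMap.congr_fun h (1, 0)
  have h2 := LinearMap.congr_fun h (0, 1)
  simp [L5param] at h1 h2
  ext
  · exact h1
  · exact h2.2

theorem L5_der_one_zero_one (a c : ℂ) (ha : a ≠ 1) :
    (∀ d : (ℂ × ℂ) →ₗ[ℂ] (ℂ × ℂ), IsDer (L5l a c) (L5r a c) 1 0 1 d ↔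
      ∃ d₁₁ d₂₂ : ℂ, d ((1 : ℂ), (0 : ℂ)) = (d₁₁, 0) ∧ d ((0 : ℂ), (1 : ℂ)) = (-c * d₁₁ + c * d₂₂, d₂₂)) ∧
    Module.finrank ℂ (DerSub (L5l a c) (L5r a c) 1 0 1) = 2 := by
  refine ⟨L5_iff a c, ?_⟩
  rw [L5_range, LinearMap.finrank_range_of_inj (L5param_injective c)]
  simp
end
end

section
/- Let a, c ∈ ℂ with a ≠ 1, and let L⁵₂(a,c) be the left-symmetric dialgebra on ℂ² with basis e₁, e₂ and products e₂ ⊣ e₂ = c·e₁ + e₂, e₂ ⊢ e₁ = a·e₁, e₂ ⊢ e₂ = c·(1−a)·e₁ + e₂ (all other basis products zero). Then a linear map d : ℂ² → ℂ² is a (0,1,0)-derivation of L⁵₂(a,c) if and only if its matrix in the basis (e₁,e₂) has the form [[d₁₁, d₁₂],[0, 0]] for some d₁₁, d₁₂ ∈ ℂ; in particular Der_{(0,1,0)}L⁵₂(a,c) has dimension 2. -/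
noncomputable section

theorem isDer_aux (a c : ℂ) (d : (ℂ × ℂ) →ₗ[ℂ] (ℂ × ℂ)) :
    IsDer (L5l a c) (L5r a c) 0 1 0 d ↔ ∀ p, (d p).2 = 0 := by
  constructor
  · rintro ⟨h, -⟩ p
    have := congrArg Prod.snd (h p (0, 1))
    simpa [L5l, eq_comm] using this
  · intro h
    refine ⟨fun p q => ?_, fun p q => ?_⟩
    · simp [L5l, h]
      rfl
    · simp [L5r, h]
      rfl

theorem decomp_aux (d : (ℂ × ℂ) →ₗ[ℂ] (ℂ × ℂ)) (p : ℂ × ℂ) :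
    d p = p.1 • d (1, 0) + p.2 • d (0, 1) := by
  rw [← map_smul, ← map_smul, ← map_add]
  simp

/-- The derivation space is identified with the space of linear functionals. -/
def derEquiv (a c : ℂ) : DerSub (L5l a c) (L5r a c) 0 1 0 ≃ₗ[ℂ] ((ℂ × ℂ) →ₗ[ℂ] ℂ) where
  toFun d := (LinearMap.fst ℂ ℂ ℂ).comp d.1
  map_add' x y := by ext <;> simp
  map_smul' r x := by ext <;> simp
  invFun f := ⟨(LinearMap.inl ℂ ℂ ℂ).comp f, (isDer_aux a c _).2 (fun p => by simp)⟩
  left_inv d := by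
    apply Subtype.ext
    refine LinearMap.ext fun p => Prod.ext ?_ ?_
    · simp
    · simpa using ((isDer_aux a c _).1 d.2 p).symm
  right_inv f := by
    refine LinearMap.ext fun p => ?_
    simp

theorem L5_der_zero_one_zero (a c : ℂ) (ha : a ≠ 1) :
    (∀ d : (ℂ × ℂ) →ₗ[ℂ] (ℂ × ℂ), IsDer (L5l a c) (L5r a c) 0 1 0 d ↔
      ∃ d₁₁ d₁₂ : ℂ, d ((1 : ℂ), (0 : ℂ)) = (d₁₁, 0) ∧ d ((0 : ℂ), (1 : ℂ)) = (d₁₂, 0)) ∧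
    Module.finrank ℂ (DerSub (L5l a c) (L5r a c) 0 1 0) = 2 := by
  refine ⟨fun d => ?_, ?_⟩
  · rw [isDer_aux]
    constructor
    · intro h
      exact ⟨(d (1, 0)).1, (d (0, 1)).1, Prod.ext rfl (h _), Prod.ext rfl (h _)⟩
    · rintro ⟨x, y, h1, h2⟩ p
      rw [decomp_aux, h1, h2]
      simp
  · rw [(derEquiv a c).finrank_eq, Module.finrank_linearMap]
    simp
end
end
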